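/- arXiv:2603.23143 — 7 statements merged into one kernel-verified Lean document; each statement's English description precedes it below -/
import Mathlib

section
/- Let R be a commutative ring, let A be an n×n matrix over R, let m, s be positive integers with s dividing m, and let b_0, …, b_m ∈ R. Then the Paterson–Stockmeyer nested scheme PS_m(A) = (⋯((Σ_{j=0}^{s} b_{m−j} A^{s−j}) A^s + Σ_{j=1}^{s} b_{m−s−j} A^{s−j}) A^s + ⋯) A^s + Σ_{j=1}^{s} b_{s−j} A^{s−j}, in which the outer multiplication by A^s is applied m/s − 1 times, equals the matrix polynomial P_m(A) = Σ_{i=0}^{m} b_i A^i. -/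
/-- The Paterson–Stockmeyer nested scheme: `PSscheme A b m s ℓ` is the value of the
nesting after `ℓ` outer multiplications by `A^s`.  The innermost level (`ℓ = 0`) is
`Σ_{j=0}^{s} b_{m−j} A^{s−j}`, and each subsequent level multiplies by `A^s` and adds
`Σ_{j=1}^{s} b_{m−ℓs−j} A^{s−j}`. -/
def PSscheme {R : Type*} [CommRing R] {n : ℕ} (A : Matrix (Fin n) (Fin n) R)
    (b : ℕ → R) (m s : ℕ) : ℕ → Matrix (Fin n) (Fin n) R
  | 0 => ∑ j ∈ Finset.range (s + 1), b (m - j) • A ^ (s - j)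
  | ℓ + 1 => PSscheme A b m s ℓ * A ^ s +
      ∑ j ∈ Finset.Icc 1 s, b (m - (ℓ + 1) * s - j) • A ^ (s - j)

/-! After `ℓ` outer multiplications the nested scheme has consumed the leading coefficients
`b_{m-(ℓ+1)s}, …, b_m`, and its value is the polynomial in `A` with exactly these coefficients:
multiplying by `A ^ s` shifts the exponents by `s`, and the sum added next fills the `s` vacated
low-order places. At `ℓ = m / s - 1` no coefficient is left over. -/

theorem sum_Ico_reflect_add {M : Type*} [AddCommMonoid M] (f : ℕ → ℕ → M) (r p s : ℕ) :
    ∑ j ∈ Finset.Ico p (s + 1), f (r + s - j) (s - j) =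
      ∑ i ∈ Finset.range (s + 1 - p), f (r + i) i := by
  calc
    _ = ∑ j ∈ Finset.Ico p (s + 1), f (r + (s - j)) (s - j) :=
      Finset.sum_congr rfl fun j hj => by
        rw [Nat.add_sub_assoc (Nat.lt_succ_iff.mp (Finset.mem_Ico.mp hj).2)]
    _ = _ := by
      rw [Finset.sum_Ico_reflect (fun i => f (r + i) i) p le_rfl, Nat.sub_self,
        Finset.range_eq_Ico]

theorem sum_range_smul_pow_mul_pow_add {R S : Type*} [Semiring S] [SMul R S] [IsScalarTower R S S]
    (x : S) (c : ℕ → R) (s k : ℕ) :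
    (∑ i ∈ Finset.range k, c (s + i) • x ^ i) * x ^ s + ∑ i ∈ Finset.range s, c i • x ^ i =
      ∑ i ∈ Finset.range (s + k), c i • x ^ i := by
  rw [Finset.sum_range_add, add_comm, Finset.sum_mul]
  simp only [smul_mul_assoc, ← pow_add, add_comm s]

namespace PSscheme

variable {R : Type*} [CommRing R] {n : ℕ} (A : Matrix (Fin n) (Fin n) R) (b : ℕ → R)

theorem zero_eq_sum_range (r s : ℕ) :
    PSscheme A b (r + s) s 0 = ∑ i ∈ Finset.range (s + 1), b (r + i) • A ^ i := by
  rw [PSscheme, Finset.range_eq_Ico, sum_Ico_reflect_add (fun i e => b i • A ^ e), Nat.sub_zero,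
    Finset.range_eq_Ico]

theorem succ_eq_mul_pow_add_sum_range (r s ℓ : ℕ) :
    PSscheme A b (r + (ℓ + 2) * s) s (ℓ + 1) =
      PSscheme A b (r + (ℓ + 2) * s) s ℓ * A ^ s +
        ∑ i ∈ Finset.range s, b (r + i) • A ^ i := by
  have remaining_degree : r + (ℓ + 2) * s - (ℓ + 1) * s = r + s :=
    Nat.sub_eq_of_eq_add (by ring)
  rw [PSscheme, remaining_degree, ← Finset.Ico_add_one_right_eq_Icc,
    sum_Ico_reflect_add (fun i e => b i • A ^ e), Nat.add_sub_cancel]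

theorem eq_sum_range (r s ℓ : ℕ) :
    PSscheme A b (r + (ℓ + 1) * s) s ℓ =
      ∑ i ∈ Finset.range ((ℓ + 1) * s + 1), b (r + i) • A ^ i := by
  induction ℓ generalizing r with
  | zero => simpa only [zero_add, one_mul] using zero_eq_sum_range A b r s
  | succ ℓ ih =>
    have degree_split : r + (ℓ + 2) * s = (r + s) + (ℓ + 1) * s := by ring
    calc
      PSscheme A b (r + (ℓ + 2) * s) s (ℓ + 1)
      _ = PSscheme A b (r + (ℓ + 2) * s) s ℓ * A ^ s +
            ∑ i ∈ Finset.range s, b (r + i) • A ^ i :=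
        succ_eq_mul_pow_add_sum_range A b r s ℓ
      _ = (∑ i ∈ Finset.range ((ℓ + 1) * s + 1), b (r + (s + i)) • A ^ i) * A ^ s +
            ∑ i ∈ Finset.range s, b (r + i) • A ^ i := by
        simp only [degree_split, ih (r + s), ← add_assoc r s]
      _ = ∑ i ∈ Finset.range (s + ((ℓ + 1) * s + 1)), b (r + i) • A ^ i :=
        sum_range_smul_pow_mul_pow_add A (fun i => b (r + i)) s _
      _ = ∑ i ∈ Finset.range ((ℓ + 2) * s + 1), b (r + i) • A ^ i := by
        congr 2; ring

end PSscheme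

/-- For a commutative ring `R`, an `n×n` matrix `A`, positive integers
`m, s` with `s ∣ m`, and coefficients `b 0, …, b m`, the Paterson–Stockmeyer nested
scheme with `m/s − 1` outer multiplications by `A^s` equals `Σ_{i=0}^{m} b_i A^i`. -/
theorem paterson_stockmeyer_correct {R : Type*} [CommRing R] {n : ℕ}
    (A : Matrix (Fin n) (Fin n) R) (m s : ℕ) (hm : 0 < m) (hs : 0 < s)
    (hdvd : s ∣ m) (b : ℕ → R) :
    PSscheme A b m s (m / s - 1) = ∑ i ∈ Finset.range (m + 1), b i • A ^ i := by
  have quotient_pos : 0 < m / s := Nat.div_pos (Nat.le_of_dvd hm hdvd) hs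
  have levels_mul : (m / s - 1 + 1) * s = m := by
    rw [Nat.sub_add_cancel quotient_pos, Nat.div_mul_cancel hdvd]
  simpa only [zero_add, levels_mul] using PSscheme.eq_sum_range A b 0 s (m / s - 1)
end

section
/- For every positive integer m there exists s ∈ {⌊√m⌋, ⌈√m⌉} such that for all positive integers s′, s + ⌈m/s⌉ − 2 ≤ s′ + ⌈m/s′⌉ − 2. In other words, the minimum of the Paterson–Stockmeyer cost function s′ ↦ s′ + ⌈m/s′⌉ − 2 over positive integers s′ is attained at s′ = ⌊√m⌋ or at s′ = ⌈√m⌉. -/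
/-!
Put `t = ⌈m / s'⌉`, so that `m ≤ s' * t`. The cost at `s` is at most the cost at `s'` as soon as
`m ≤ s * (s' + t - s)`. Since `s * (s' + t - s) = s' * t - (s - s') * (s - t)`, this holds when `s`
lies between `s'` and `t`. If `s` is at distance less than `1` from `√m`, it cannot exceed both `s'`
and `t`, because `(s - 1) ^ 2 < m`; and if it is smaller than both, then
`s * (s' + t - s) ≥ s * (s + 2) = (s + 1) ^ 2 - 1 ≥ m`, because `m` is an integer.
-/

lemma le_mul_add_sub_of_le_mul {R : Type*} [CommRing R] [LinearOrder R] [IsStrictOrderedRing R]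
    {x : R} {s a b : ℤ} (ha : 0 ≤ a) (h_lower : ((s : R) - 1) ^ 2 < x)
    (h_upper : x ≤ s * (s + 2)) (hab : x ≤ a * b) :
    x ≤ s * (a + b - s) := by
  have hs : (0 : R) < s := by linarith [h_lower.trans_le h_upper]
  by_cases h_between : (s - a) * (s - b) ≤ 0
  · have h_between' : ((s : R) - a) * (s - b) ≤ 0 := mod_cast h_between
    linarith
  rcases pos_and_pos_or_neg_and_neg_of_mul_pos (not_le.mp h_between) with
    ⟨has, hbs⟩ | ⟨hsa, hsb⟩
  · have h_le : a * b ≤ (s - 1) ^ 2 := by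
      rw [sq]
      exact mul_le_mul_of_nonneg (by lia) (by lia) ha (by lia)
    have h_le' : (a : R) * b ≤ (s - 1) ^ 2 := mod_cast h_le
    exact absurd (hab.trans h_le') h_lower.not_ge
  · have h_add : s + 2 ≤ a + b - s := by lia
    have h_add' : (s : R) + 2 ≤ a + b - s := mod_cast h_add
    exact h_upper.trans (mul_le_mul_of_nonneg_left h_add' hs.le)

lemma add_ceil_div_le_add_ceil_div {K : Type*} [Field K] [LinearOrder K] [IsStrictOrderedRing K]
    [FloorRing K] {x : K} {s t : ℤ} (h_lower : ((s : K) - 1) ^ 2 < x)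
    (h_upper : x ≤ s * (s + 2)) (ht : 0 < t) :
    s + ⌈x / s⌉ ≤ t + ⌈x / t⌉ := by
  have hs : (0 : K) < s := by linarith [h_lower.trans_le h_upper]
  have h_mul : x ≤ t * ⌈x / t⌉ := (div_le_iff₀' (mod_cast ht)).mp (Int.le_ceil _)
  have h_ceil : ⌈x / s⌉ ≤ t + ⌈x / t⌉ - s := by
    rw [Int.ceil_le, div_le_iff₀' hs]
    exact_mod_cast le_mul_add_sub_of_le_mul ht.le h_lower h_upper h_mul
  linarith

lemma sq_sub_one_lt_of_abs_sub_sqrt_lt_one {x s : ℝ} (hx : 1 ≤ x) (hs : |s - √x| < 1) :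
    (s - 1) ^ 2 < x := by
  obtain ⟨h_left, h_right⟩ := abs_lt.mp hs
  have h_one : 1 ≤ √x := Real.one_le_sqrt.mpr hx
  exact Real.sq_lt.mpr ⟨by linarith, by linarith⟩

lemma le_mul_add_two_of_abs_sub_sqrt_lt_one {m s : ℕ} (hs : |(s : ℝ) - √m| < 1) :
    m ≤ s * (s + 2) := by
  have h_sqrt : √(m : ℝ) < s + 1 := by linarith [(abs_lt.mp hs).1]
  have h_sq : (m : ℝ) < (s + 1) ^ 2 := (Real.sqrt_lt' (by positivity)).mp h_sqrt
  have h_sq_nat : m < (s + 1) ^ 2 := mod_cast h_sq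
  linarith

lemma abs_natCeil_sub_lt_one {K : Type*} [Ring K] [LinearOrder K] [IsStrictOrderedRing K]
    [FloorSemiring K] {x : K} (hx : 0 ≤ x) : |(⌈x⌉₊ : K) - x| < 1 := by
  rw [abs_of_nonneg (sub_nonneg.mpr (Nat.le_ceil x))]
  exact sub_lt_iff_lt_add'.mpr (Nat.ceil_lt_add_one hx)

theorem ps_cost_min_at_sqrt_general {m s : ℕ} (hm : 0 < m) (hs : |(s : ℝ) - √m| < 1)
    (s' : ℕ) (hs' : 0 < s') :
    (s : ℤ) + ⌈(m : ℚ) / s⌉ - 2 ≤ (s' : ℤ) + ⌈(m : ℚ) / s'⌉ - 2 := by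
  have h_lower_int : ((s : ℤ) - 1) ^ 2 < m :=
    mod_cast sq_sub_one_lt_of_abs_sub_sqrt_lt_one (mod_cast hm) hs
  have h_lower : (((s : ℤ) : ℚ) - 1) ^ 2 < m := mod_cast h_lower_int
  have h_upper : (m : ℚ) ≤ (s : ℤ) * ((s : ℤ) + 2) :=
    mod_cast le_mul_add_two_of_abs_sub_sqrt_lt_one hs
  exact sub_le_sub_right (add_ceil_div_le_add_ceil_div h_lower h_upper (mod_cast hs')) 2

/-- For every positive integer `m` there exists
`s ∈ {⌊√m⌋, ⌈√m⌉}` such that the Paterson–Stockmeyer cost function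
`s′ ↦ s′ + ⌈m/s′⌉ − 2` over positive integers `s′` attains its minimum at `s`. -/
theorem ps_cost_min_at_sqrt (m : ℕ) (hm : 0 < m) :
    ∃ s : ℕ, (s = ⌊Real.sqrt m⌋₊ ∨ s = ⌈Real.sqrt m⌉₊) ∧
      ∀ s' : ℕ, 0 < s' →
        (s : ℤ) + ⌈(m : ℚ) / s⌉ - 2 ≤ (s' : ℤ) + ⌈(m : ℚ) / s'⌉ - 2 := by
  exact ⟨⌈√(m : ℝ)⌉₊, .inr rfl,
    ps_cost_min_at_sqrt_general hm (abs_natCeil_sub_lt_one (Real.sqrt_nonneg m))⟩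
end

section
/- Let s be a positive integer and define C_PS(m) = min over positive integers s′ of (s′ + ⌈m/s′⌉ − 2). Then C_PS(s²) = 2s − 2 and C_PS(s(s+1)) = 2s − 1. -/
/-!
A block size `t` and the block count `k = ⌈m / t⌉` satisfy `m ≤ t * k`, so by AM–GM
`4 * m ≤ (t + k) ^ 2`. When `m = a * b` with `|a - b| ≤ 1`, the left side is
`(a + b) ^ 2 - (a - b) ^ 2 ≥ (a + b) ^ 2 - 1`, and integrality of `t + k` gives `a + b ≤ t + k`.
Block size `a` attains this bound. Both degrees are balanced products: `s * s` and `s * (s + 1)`.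
-/

/-- The number of matrix products used by the Paterson–Stockmeyer method with block size `t` on a
polynomial of degree `m`. It is integer-valued so that subtracting `2` does not truncate; at
`t = 0` it takes the junk value `-2`. -/
def psCost (m t : ℕ) : ℤ :=
  (t : ℤ) + ⌈(m : ℚ) / t⌉ - 2

lemma psCost_mul_left {a : ℕ} (ha : 0 < a) (b : ℕ) : psCost (a * b) a = (a : ℤ) + b - 2 := by
  have ha' : (a : ℚ) ≠ 0 := Nat.cast_ne_zero.mpr ha.ne'
  rw [psCost, Nat.cast_mul, mul_div_cancel_left₀ _ ha', Int.ceil_natCast]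

lemma psCost_add_two_pos (m : ℕ) {t : ℕ} (ht : 0 < t) : 0 < psCost m t + 2 := by
  have hceil : 0 ≤ ⌈(m : ℚ) / t⌉ := Int.ceil_nonneg (by positivity)
  unfold psCost
  lia

lemma le_mul_ceil_div {K : Type*} [Field K] [LinearOrder K] [IsStrictOrderedRing K] [FloorRing K]
    (x : K) {y : K} (hy : 0 < y) : x ≤ y * ⌈x / y⌉ :=
  (div_le_iff₀' hy).mp (Int.le_ceil _)

lemma four_mul_le_sq_psCost_add_two (m : ℕ) {t : ℕ} (ht : 0 < t) :
    4 * (m : ℤ) ≤ (psCost m t + 2) ^ 2 := by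
  have hm : (m : ℤ) ≤ t * ⌈(m : ℚ) / t⌉ := by
    exact_mod_cast le_mul_ceil_div (m : ℚ) (Nat.cast_pos.mpr ht)
  calc
    4 * (m : ℤ) ≤ 4 * (t * ⌈(m : ℚ) / t⌉) := by gcongr
    _ = 4 * t * ⌈(m : ℚ) / t⌉ := (mul_assoc _ _ _).symm
    _ ≤ (t + ⌈(m : ℚ) / t⌉) ^ 2 := four_mul_le_sq_add _ _
    _ = (psCost m t + 2) ^ 2 := by rw [psCost, sub_add_cancel]

lemma add_le_of_abs_sub_le_one {a b n : ℤ} (hab : |a - b| ≤ 1) (hn : 0 < n)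
    (h : 4 * (a * b) ≤ n ^ 2) : a + b ≤ n := by
  have hdiff : (a - b) ^ 2 ≤ 1 := (sq_le_one_iff_abs_le_one _).mpr hab
  have hpolar : (a + b) ^ 2 = 4 * (a * b) + (a - b) ^ 2 := by ring
  have hsum : (a + b) ^ 2 ≤ n ^ 2 + 1 := by linarith [hpolar]
  have hlt : (a + b) ^ 2 < (n + 1) ^ 2 := by linarith [hsum, add_sq n 1]
  exact Int.lt_add_one_iff.mp (lt_of_pow_lt_pow_left₀ 2 (by positivity) hlt)

theorem isLeast_psCost_mul {a b : ℕ} (ha : 0 < a) (hab : |(a : ℤ) - b| ≤ 1) :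
    IsLeast {c : ℤ | ∃ t : ℕ, 0 < t ∧ c = psCost (a * b) t} ((a : ℤ) + b - 2) := by
  refine ⟨⟨a, ha, (psCost_mul_left ha b).symm⟩, ?_⟩
  rintro _ ⟨t, ht, rfl⟩
  have hsq : 4 * ((a : ℤ) * b) ≤ (psCost (a * b) t + 2) ^ 2 := by
    simpa only [Nat.cast_mul] using four_mul_le_sq_psCost_add_two (a * b) ht
  exact sub_le_iff_le_add.mpr (add_le_of_abs_sub_le_one hab (psCost_add_two_pos _ ht) hsq)

/-- For a positive integer `s`, the minimal Paterson–Stockmeyer cost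
`C_PS(m) = min_{s′ ≥ 1} (s′ + ⌈m/s′⌉ − 2)` satisfies `C_PS(s²) = 2s − 2` and
`C_PS(s(s+1)) = 2s − 1`.  Here "the minimum equals `v`" is expressed as
`IsLeast` of the set of attained costs. -/
theorem ps_cost_optimal_degrees (s : ℕ) (hs : 0 < s) :
    IsLeast {c : ℤ | ∃ s' : ℕ, 0 < s' ∧
        c = (s' : ℤ) + ⌈((s ^ 2 : ℕ) : ℚ) / s'⌉ - 2} (2 * s - 2) ∧
    IsLeast {c : ℤ | ∃ s' : ℕ, 0 < s' ∧
        c = (s' : ℤ) + ⌈((s * (s + 1) : ℕ) : ℚ) / s'⌉ - 2} (2 * s - 1) := by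
  constructor
  · rw [sq, two_mul]
    exact isLeast_psCost_mul hs (by simp)
  · have hcost : (2 * s - 1 : ℤ) = (s : ℤ) + (s + 1 : ℕ) - 2 := by
      push_cast
      ring
    rw [hcost]
    exact isLeast_psCost_mul hs (by simp)
end

section
/- For every integer m ≥ 8 with m ∉ {9, 11}, there exist integers s ≥ 2 and p ≥ 0 with m = 4s + p such that s + 1 + ⌈p/s⌉ = C_PS(m) − 1, where C_PS(m) = min over positive integers s′ of (s′ + ⌈m/s′⌉ − 2). That is, the evaluation scheme z_{1ps} achieves a cost exactly one matrix product lower than the optimal Paterson–Stockmeyer cost for every such degree m. -/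
/-!
Writing `m = 4s + p` gives `⌈m/s⌉ = 4 + ⌈p/s⌉`, so the scheme `z_{1ps}` always costs exactly one
product less than the Paterson–Stockmeyer scheme with the same block size `s`. It remains to find an
optimal block size with `4s ≤ m`. By AM–GM every block size `t` satisfies `4m ≤ (t + ⌈m/t⌉)²`, so
`s` is optimal as soon as `(s + ⌈m/s⌉ - 1)² < 4m`. This holds for `s = ⌊√m⌋`, and `4⌊√m⌋ ≤ m` once
`m ≥ 12`; for `m = 8` and `m = 10` the block size `2` works.
-/

/-- The number of matrix products used by the Paterson–Stockmeyer scheme with block size `s` on a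
polynomial of degree `m`. It is meaningful for `0 < s` only, and integer-valued so that the `- 2`
does not truncate. -/
def patersonStockmeyerCost (m s : ℕ) : ℤ :=
  s + ⌈(m : ℚ) / s⌉ - 2

/-- The number of matrix products used by the scheme `z_{1ps}` on a polynomial of degree
`4 * s + p`. It is meaningful for `0 < s` only. -/
def z1psCost (s p : ℕ) : ℤ :=
  s + 1 + ⌈(p : ℚ) / s⌉

theorem z1psCost_eq_patersonStockmeyerCost_sub_one {s : ℕ} (hs : s ≠ 0) (p : ℕ) :
    z1psCost s p = patersonStockmeyerCost (4 * s + p) s - 1 := by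
  have hdiv : ((4 * s + p : ℕ) : ℚ) / s = p / s + (4 : ℤ) := by
    push_cast
    field_simp
    ring
  rw [z1psCost, patersonStockmeyerCost, hdiv, Int.ceil_add_intCast]
  ring

theorem four_mul_le_sq_add_ceil_div {K : Type*} [Field K] [LinearOrder K] [IsStrictOrderedRing K]
    [FloorRing K] (x : K) {y : K} (hy : 0 < y) : 4 * x ≤ (y + ⌈x / y⌉) ^ 2 :=
  calc
    4 * x ≤ 4 * (⌈x / y⌉ * y) := by gcongr; exact (div_le_iff₀ hy).1 (Int.le_ceil _)
    _ = 4 * y * ⌈x / y⌉ := by ring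
    _ ≤ (y + ⌈x / y⌉) ^ 2 := four_mul_le_sq_add _ _

theorem isMinOn_patersonStockmeyerCost_of_sq_lt {m s : ℕ}
    (h : (s + ⌈(m : ℚ) / s⌉ - 1) ^ 2 < 4 * (m : ℤ)) :
    IsMinOn (patersonStockmeyerCost m) (Set.Ioi 0) s := by
  intro t (ht : 0 < t)
  have ham_gm : 4 * (m : ℤ) ≤ (t + ⌈(m : ℚ) / t⌉) ^ 2 := by
    exact_mod_cast four_mul_le_sq_add_ceil_div (m : ℚ) (Nat.cast_pos.2 ht)
  have hlt : s + ⌈(m : ℚ) / s⌉ - 1 < t + ⌈(m : ℚ) / t⌉ :=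
    lt_of_pow_lt_pow_left₀ 2 (by positivity) (h.trans_le ham_gm)
  change s + ⌈(m : ℚ) / s⌉ - 2 ≤ t + ⌈(m : ℚ) / t⌉ - 2
  linarith [Int.sub_one_lt_iff.1 hlt]

theorem sqrt_le_ceil_div_sqrt (m : ℕ) : (m.sqrt : ℤ) ≤ ⌈(m : ℚ) / m.sqrt⌉ := by
  rcases m.eq_zero_or_pos with rfl | hm
  · simp
  · have hle : (m.sqrt : ℚ) ≤ m / m.sqrt := by
      rw [le_div_iff₀ (Nat.cast_pos.2 (Nat.sqrt_pos.2 hm))]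
      exact_mod_cast m.sqrt_le
    exact_mod_cast hle.trans (Int.le_ceil _)

theorem ceil_div_sqrt_le_sqrt_add_two (m : ℕ) : ⌈(m : ℚ) / m.sqrt⌉ ≤ (m.sqrt : ℤ) + 2 := by
  have hm : m ≤ (m.sqrt + 2) * m.sqrt := by linarith [m.sqrt_le_add]
  refine Int.ceil_le.2 (div_le_of_le_mul₀ (by positivity) (by positivity) ?_)
  exact_mod_cast hm

theorem sq_sqrt_add_ceil_div_sqrt_sub_one_lt {m : ℕ} (hm : 0 < m) :
    (m.sqrt + ⌈(m : ℚ) / m.sqrt⌉ - 1) ^ 2 < 4 * (m : ℤ) := by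
  have hlower := sqrt_le_ceil_div_sqrt m
  have hupper := ceil_div_sqrt_le_sqrt_add_two m
  have hprod : (m.sqrt : ℤ) * (⌈(m : ℚ) / m.sqrt⌉ - 1) < m := by
    have hceil : (⌈(m : ℚ) / m.sqrt⌉ - 1 : ℚ) < m / m.sqrt :=
      sub_lt_iff_lt_add.2 (Int.ceil_lt_add_one _)
    rw [lt_div_iff₀' (Nat.cast_pos.2 (Nat.sqrt_pos.2 hm))] at hceil
    exact_mod_cast hceil
  set s : ℤ := ↑m.sqrt
  set k : ℤ := ⌈(m : ℚ) / m.sqrt⌉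
  have hdiff : (s - (k - 1)) ^ 2 ≤ 1 :=
    (sq_le_one_iff_abs_le_one _).2 (abs_le.2 ⟨by linarith, by linarith⟩)
  calc
    (s + k - 1) ^ 2 = 4 * (s * (k - 1)) + (s - (k - 1)) ^ 2 := by ring
    _ ≤ 4 * ((m : ℤ) - 1) + 1 := by gcongr; exact Int.le_sub_one_of_lt hprod
    _ < 4 * (m : ℤ) := by linarith

theorem isMinOn_patersonStockmeyerCost_sqrt {m : ℕ} (hm : 0 < m) :
    IsMinOn (patersonStockmeyerCost m) (Set.Ioi 0) m.sqrt :=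
  isMinOn_patersonStockmeyerCost_of_sq_lt (sq_sqrt_add_ceil_div_sqrt_sub_one_lt hm)

theorem four_mul_sqrt_le_self {m : ℕ} (hm : 12 ≤ m) : 4 * m.sqrt ≤ m := by
  rcases le_or_gt m.sqrt 3 with hsmall | hlarge
  · linarith
  · exact (Nat.mul_le_mul_right _ hlarge).trans m.sqrt_le

theorem exists_isMinOn_patersonStockmeyerCost {m : ℕ} (hm : 8 ≤ m) (h9 : m ≠ 9) (h11 : m ≠ 11) :
    ∃ s, 2 ≤ s ∧ 4 * s ≤ m ∧ IsMinOn (patersonStockmeyerCost m) (Set.Ioi 0) s := by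
  obtain rfl | rfl | hm12 : m = 8 ∨ m = 10 ∨ 12 ≤ m := by omega
  · exact ⟨2, le_rfl, by norm_num, isMinOn_patersonStockmeyerCost_of_sq_lt (by norm_num)⟩
  · exact ⟨2, le_rfl, by norm_num, isMinOn_patersonStockmeyerCost_of_sq_lt (by norm_num)⟩
  · exact ⟨m.sqrt, Nat.le_sqrt.2 (by omega), four_mul_sqrt_le_self hm12,
      isMinOn_patersonStockmeyerCost_sqrt (by omega)⟩

/-- For every integer `m ≥ 8` with `m ∉ {9, 11}`, there exist integers
`s ≥ 2` and `p ≥ 0` with `m = 4s + p` such that `s + 1 + ⌈p/s⌉ = C_PS(m) − 1`,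
where `C_PS(m)` is the minimum over positive integers `s′` of `s′ + ⌈m/s′⌉ − 2`
(expressed via `IsLeast`). -/
theorem z1ps_saves_one_product (m : ℕ) (hm : 8 ≤ m) (h9 : m ≠ 9) (h11 : m ≠ 11)
    (C : ℤ)
    (hC : IsLeast {c : ℤ | ∃ s' : ℕ, 0 < s' ∧ c = (s' : ℤ) + ⌈(m : ℚ) / s'⌉ - 2} C) :
    ∃ s p : ℕ, 2 ≤ s ∧ m = 4 * s + p ∧
      (s : ℤ) + 1 + ⌈(p : ℚ) / s⌉ = C - 1 := by
  obtain ⟨s, hs, hsm, hmin⟩ := exists_isMinOn_patersonStockmeyerCost hm h9 h11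
  obtain ⟨p, rfl⟩ := Nat.exists_eq_add_of_le hsm
  have hs_pos : 0 < s := by omega
  have hC_eq : C = patersonStockmeyerCost (4 * s + p) s := by
    refine hC.unique ⟨⟨s, hs_pos, rfl⟩, ?_⟩
    rintro _ ⟨t, ht, rfl⟩
    exact hmin ht
  refine ⟨s, p, hs, rfl, ?_⟩
  rw [hC_eq]
  exact z1psCost_eq_patersonStockmeyerCost_sub_one hs_pos.ne' p
end

section
/- Let b_0, …, b_8 be real numbers with b_8 > 0 and b_7 ≠ 0. Define c_4 = √b_8, c_3 = b_7/(2c_4), de_2 = (b_6 − c_3²)/c_4, d_1 = (b_5 − c_3·de_2)/c_4, and suppose the discriminant Δ = (d_1 − (c_3/c_4)·de_2)² + 4(c_3/c_4)(b_3 + (c_3²/c_4)d_1 − (c_3/c_4)b_4) satisfies Δ ≥ 0. Define e_2 = ((c_3/c_4)·de_2 − d_1 + √Δ)·c_4/(2c_3), d_2 = de_2 − e_2, e_0 = (b_4 − c_3 d_1 − d_2 e_2)/c_4, f_2 = b_2, f_1 = b_1, f_0 = b_0. Then for every real square matrix A, with y_{02}(A) = c_4 A⁴ + c_3 A³, the scheme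 y_{12}(A) = (y_{02}(A) + d_2 A² + d_1 A)(y_{02}(A) + e_2 A²) + e_0 y_{02}(A) + f_2 A² + f_1 A + f_0 I equals Σ_{i=0}^{8} b_i A^i. -/
/-! Multiplying out the scheme and comparing coefficients gives one equation for each power of `A`.
Those of degrees `8` to `4` successively determine `c4`, `c3`, `d2 + e2`, `d1` and, once `e2` is
known, `e0`. Substituting this `e0` into the equation of degree `3` leaves a quadratic equation in
`e2` with leading coefficient `c3 / c4`, whose discriminant is `Δ`. Either square root `c4` of
`b 8` and either square root `s` of `Δ` will do: hence up to four sets of coefficients. -/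

section Scheme

variable {K R : Type*} [CommSemiring K] [Semiring R] [Algebra K R]

/-- The three-product evaluation scheme `y₁₂` of degree `8`, at an element `a` of an arbitrary
algebra. The summand `y₀₂(a) = c4 a⁴ + c3 a³`, which the scheme computes once, is inlined. -/
def y12 (c4 c3 d2 d1 e2 e0 f2 f1 f0 : K) (a : R) : R :=
  (c4 • a ^ 4 + c3 • a ^ 3 + d2 • a ^ 2 + d1 • a) * (c4 • a ^ 4 + c3 • a ^ 3 + e2 • a ^ 2) +
    e0 • (c4 • a ^ 4 + c3 • a ^ 3) + f2 • a ^ 2 + f1 • a + f0 • (1 : R)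

theorem y12_eq_expansion (c4 c3 d2 d1 e2 e0 f2 f1 f0 : K) (a : R) :
    y12 c4 c3 d2 d1 e2 e0 f2 f1 f0 a =
      f0 • (1 : R) + f1 • a + f2 • a ^ 2 + (d1 * e2 + c3 * e0) • a ^ 3 +
        (d2 * e2 + c3 * d1 + c4 * e0) • a ^ 4 + (c3 * (d2 + e2) + c4 * d1) • a ^ 5 +
        (c3 ^ 2 + c4 * (d2 + e2)) • a ^ 6 + (2 * c4 * c3) • a ^ 7 + c4 ^ 2 • a ^ 8 := by
  simp only [y12, add_mul, mul_add, smul_mul_assoc, mul_smul_comm, ← pow_add, ← pow_succ',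
    Nat.reduceAdd]
  module

theorem y12_eq_sum_of_coeff_eq {b : ℕ → K} {c4 c3 d2 d1 e2 e0 : K}
    (h8 : c4 ^ 2 = b 8) (h7 : 2 * c4 * c3 = b 7) (h6 : c3 ^ 2 + c4 * (d2 + e2) = b 6)
    (h5 : c3 * (d2 + e2) + c4 * d1 = b 5) (h4 : d2 * e2 + c3 * d1 + c4 * e0 = b 4)
    (h3 : d1 * e2 + c3 * e0 = b 3) (a : R) :
    y12 c4 c3 d2 d1 e2 e0 (b 2) (b 1) (b 0) a = ∑ i ∈ Finset.range 9, b i • a ^ i := by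
  simp only [y12_eq_expansion, h8, h7, h6, h5, h4, h3, Finset.sum_range_succ,
    Finset.sum_range_zero, zero_add, pow_zero, pow_one]

end Scheme

section Quadratic

variable {K : Type*} [Field K] {b3 b4 c4 c3 de2 d2 d1 e2 e0 : K}

theorem y12_coeff_three_eq_iff_quadratic (hc4 : c4 ≠ 0) (hde : d2 + e2 = de2)
    (h4 : d2 * e2 + c3 * d1 + c4 * e0 = b4) :
    d1 * e2 + c3 * e0 = b3 ↔
      c3 / c4 * (e2 * e2) + (d1 - c3 / c4 * de2) * e2 +
        (c3 / c4 * b4 - c3 ^ 2 / c4 * d1 - b3) = 0 := by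
  have residual_eq : d1 * e2 + c3 * e0 - b3 =
      c3 / c4 * (e2 * e2) + (d1 - c3 / c4 * de2) * e2 +
        (c3 / c4 * b4 - c3 ^ 2 / c4 * d1 - b3) := by
    rw [← hde, ← h4]
    field_simp
    ring
  rw [← residual_eq, sub_eq_zero]

theorem y12_quadratic_eq_zero_of_sq_eq [NeZero (2 : K)] {s : K} (hc4 : c4 ≠ 0) (hc3 : c3 ≠ 0)
    (hs : s ^ 2 = (d1 - c3 / c4 * de2) ^ 2 +
      4 * (c3 / c4) * (b3 + c3 ^ 2 / c4 * d1 - c3 / c4 * b4))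
    (he2 : e2 = (c3 / c4 * de2 - d1 + s) * c4 / (2 * c3)) :
    c3 / c4 * (e2 * e2) + (d1 - c3 / c4 * de2) * e2 +
      (c3 / c4 * b4 - c3 ^ 2 / c4 * d1 - b3) = 0 := by
  have discrim_eq : discrim (c3 / c4) (d1 - c3 / c4 * de2)
      (c3 / c4 * b4 - c3 ^ 2 / c4 * d1 - b3) = s * s := by
    rw [discrim]
    linear_combination -hs
  refine (quadratic_eq_zero_iff (div_ne_zero hc3 hc4) discrim_eq e2).mpr (Or.inl ?_)
  rw [he2, neg_sub, mul_div_assoc', div_div_eq_mul_div]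

end Quadratic

theorem y12_real_quadratic_root_general {K R : Type*} [Field K] [NeZero (2 : K)] [Semiring R]
    [Algebra K R] (b : ℕ → K) {c4 s : K} (h8 : c4 ^ 2 = b 8) (hb8 : b 8 ≠ 0) (hb7 : b 7 ≠ 0)
    (a : R) :
    let c3 := b 7 / (2 * c4)
    let de2 := (b 6 - c3 ^ 2) / c4
    let d1 := (b 5 - c3 * de2) / c4
    let Δ := (d1 - (c3 / c4) * de2) ^ 2 +
      4 * (c3 / c4) * (b 3 + (c3 ^ 2 / c4) * d1 - (c3 / c4) * b 4)
    s ^ 2 = Δ →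
    let e2 := ((c3 / c4) * de2 - d1 + s) * c4 / (2 * c3)
    let d2 := de2 - e2
    let e0 := (b 4 - c3 * d1 - d2 * e2) / c4
    y12 c4 c3 d2 d1 e2 e0 (b 2) (b 1) (b 0) a = ∑ i ∈ Finset.range 9, b i • a ^ i := by
  intro c3 de2 d1 Δ hs e2 d2 e0
  have hc4 : c4 ≠ 0 := ne_zero_pow two_ne_zero (h8 ▸ hb8)
  have h2c4 : 2 * c4 ≠ 0 := mul_ne_zero two_ne_zero hc4
  have hc3 : c3 ≠ 0 := div_ne_zero hb7 h2c4
  have hde : d2 + e2 = de2 := sub_add_cancel de2 e2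
  have h7 : 2 * c4 * c3 = b 7 := mul_div_cancel₀ (b 7) h2c4
  have h6 : c3 ^ 2 + c4 * (d2 + e2) = b 6 := by
    rw [hde, mul_div_cancel₀ _ hc4, add_sub_cancel]
  have h5 : c3 * (d2 + e2) + c4 * d1 = b 5 := by
    rw [hde, mul_div_cancel₀ _ hc4, add_sub_cancel]
  have h4 : d2 * e2 + c3 * d1 + c4 * e0 = b 4 := by
    rw [mul_div_cancel₀ _ hc4]
    ring
  have h3 : d1 * e2 + c3 * e0 = b 3 :=
    (y12_coeff_three_eq_iff_quadratic hc4 hde h4).mpr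
      (y12_quadratic_eq_zero_of_sq_eq hc4 hc3 hs rfl)
  exact y12_eq_sum_of_coeff_eq h8 h7 h6 h5 h4 h3 a

/-- With `b_8 > 0`, `b_7 ≠ 0`, coefficients defined by
`c_4 = √b_8`, `c_3 = b_7/(2c_4)`, `de_2 = (b_6 − c_3²)/c_4`,
`d_1 = (b_5 − c_3·de_2)/c_4`, nonnegative discriminant `Δ`, and the quadratic-root
choice `e_2 = ((c_3/c_4)·de_2 − d_1 + √Δ)·c_4/(2c_3)`, `d_2 = de_2 − e_2`,
`e_0 = (b_4 − c_3 d_1 − d_2 e_2)/c_4`, the scheme `y_{12}(A)` equals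
`Σ_{i=0}^{8} b_i A^i` for every real square matrix `A`. -/
theorem y12_real_quadratic_root (b : ℕ → ℝ) (hb8 : 0 < b 8) (hb7 : b 7 ≠ 0)
    {n : ℕ} (A : Matrix (Fin n) (Fin n) ℝ) :
    let c4 := Real.sqrt (b 8)
    let c3 := b 7 / (2 * c4)
    let de2 := (b 6 - c3 ^ 2) / c4
    let d1 := (b 5 - c3 * de2) / c4
    let Δ := (d1 - (c3 / c4) * de2) ^ 2 +
      4 * (c3 / c4) * (b 3 + (c3 ^ 2 / c4) * d1 - (c3 / c4) * b 4)
    0 ≤ Δ →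
    let e2 := ((c3 / c4) * de2 - d1 + Real.sqrt Δ) * c4 / (2 * c3)
    let d2 := de2 - e2
    let e0 := (b 4 - c3 * d1 - d2 * e2) / c4
    let y02 := c4 • A ^ 4 + c3 • A ^ 3
    (y02 + d2 • A ^ 2 + d1 • A) * (y02 + e2 • A ^ 2) + e0 • y02 +
        b 2 • A ^ 2 + b 1 • A + b 0 • (1 : Matrix (Fin n) (Fin n) ℝ)
      = ∑ i ∈ Finset.range 9, b i • A ^ i := by
  intro c4 c3 de2 d1 Δ hΔ
  exact y12_real_quadratic_root_general b (Real.sq_sqrt hb8.le) hb8.ne' hb7 A (Real.sq_sqrt hΔ)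
end

section
/- Let b_0, …, b_8 be real numbers with b_8 > 0, b_7 = 0, and b_5 ≠ 0. Define c_4 = √b_8, c_3 = 0, d_1 = b_5/c_4, e_2 = b_3/d_1, d_2 = b_6/c_4 − e_2, e_0 = (b_4 − d_2 e_2)/c_4, f_2 = b_2, f_1 = b_1, f_0 = b_0. Then for every real square matrix A, with y_{02}(A) = c_4 A⁴, the scheme y_{12}(A) = (y_{02}(A) + d_2 A² + d_1 A)(y_{02}(A) + e_2 A²) + e_0 y_{02}(A) + f_2 A² + f_1 A + f_0 I equals Σ_{i=0}^{8} b_i A^i. -/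
/-!
Expanding the scheme in powers of `x` and comparing coefficients with `∑ bᵢ xⁱ` gives a polynomial
system whose equation for `x³` is `b₃ = d₁ e₂ + e₀ c₃`. The unknown `e₀` normally couples it to the
equation for `x⁴`, which is what makes `e₂` the root of a quadratic. For `c₃ = 0` this coupling
disappears and the system is triangular: `b₈, b₅, b₃, b₆, b₄` determine `c₄, d₁, e₂, d₂, e₀` in
this order, dividing only by `c₄` and `d₁`.
-/

/-- The coefficients of the evaluation scheme `y₁₂` for polynomials of degree eight, named as in
the scheme. -/
structure Y12Params (K : Type*) where
  (c4 c3 d2 d1 e2 e0 f2 f1 f0 : K)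

namespace Y12Params

section Scheme

variable {K R : Type*} [CommSemiring K] [Semiring R] [Algebra K R]

/-- The inner stage `y₀₂` of the scheme. It costs two multiplications in `R`, since `x ^ 2` is
stored and reused. -/
def y02 (p : Y12Params K) (x : R) : R :=
  x ^ 2 * (p.c4 • x ^ 2 + p.c3 • x)

/-- The outer stage `y₁₂` of the scheme. It costs one multiplication in `R` beyond those for
`x ^ 2` and `y₀₂`. -/
def y12 (p : Y12Params K) (x : R) : R :=
  (p.y02 x + p.d2 • x ^ 2 + p.d1 • x) * (p.y02 x + p.e2 • x ^ 2) + p.e0 • p.y02 x +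
    p.f2 • x ^ 2 + p.f1 • x + p.f0 • (1 : R)

/-- The system of equations for the coefficients of the scheme, obtained by comparing `y₁₂` with
the polynomial of degree eight whose coefficient of `x ^ i` is `b i`. -/
structure Solves (p : Y12Params K) (b : ℕ → K) : Prop where
  coeff_eight : b 8 = p.c4 ^ 2
  coeff_seven : b 7 = 2 * p.c4 * p.c3
  coeff_six : b 6 = p.c3 ^ 2 + p.c4 * (p.d2 + p.e2)
  coeff_five : b 5 = p.c4 * p.d1 + p.c3 * (p.d2 + p.e2)
  coeff_four : b 4 = p.d2 * p.e2 + p.c3 * p.d1 + p.e0 * p.c4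
  coeff_three : b 3 = p.d1 * p.e2 + p.e0 * p.c3
  coeff_two : b 2 = p.f2
  coeff_one : b 1 = p.f1
  coeff_zero : b 0 = p.f0

theorem y02_eq (p : Y12Params K) (x : R) : p.y02 x = p.c4 • x ^ 4 + p.c3 • x ^ 3 := by
  simp only [y02, mul_add, mul_smul_comm, ← pow_add, ← pow_succ]

theorem y12_eq (p : Y12Params K) (x : R) :
    p.y12 x = p.c4 ^ 2 • x ^ 8 + (2 * p.c4 * p.c3) • x ^ 7 +
      (p.c3 ^ 2 + p.c4 * (p.d2 + p.e2)) • x ^ 6 +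
      (p.c4 * p.d1 + p.c3 * (p.d2 + p.e2)) • x ^ 5 +
      (p.d2 * p.e2 + p.c3 * p.d1 + p.e0 * p.c4) • x ^ 4 +
      (p.d1 * p.e2 + p.e0 * p.c3) • x ^ 3 +
      p.f2 • x ^ 2 + p.f1 • x + p.f0 • (1 : R) := by
  simp only [y12, y02_eq, add_mul, mul_add, smul_mul_smul_comm, ← pow_add, ← pow_succ',
    Nat.reduceAdd]
  module

theorem Solves.y12_eq_sum {p : Y12Params K} {b : ℕ → K} (h : p.Solves b) (x : R) :
    p.y12 x = ∑ i ∈ Finset.range 9, b i • x ^ i := by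
  simp only [Finset.sum_range_succ, Finset.sum_range_zero, y12_eq, h.coeff_eight, h.coeff_seven,
    h.coeff_six, h.coeff_five, h.coeff_four, h.coeff_three, h.coeff_two, h.coeff_one, h.coeff_zero,
    pow_zero, pow_one]
  abel

end Scheme

section Singular

variable {K : Type*} [Field K]

/-- The coefficients with `c₃ = 0` that the scheme needs for the polynomial with coefficients `b`
when `b 7 = 0`. The leading coefficient `c`, a square root of `b 8`, is a parameter because a
general field has no preferred one. -/
def singular (b : ℕ → K) (c : K) : Y12Params K :=
  let d1 := b 5 / c
  let e2 := b 3 / d1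
  let d2 := b 6 / c - e2
  { c4 := c, c3 := 0, d2, d1, e2, e0 := (b 4 - d2 * e2) / c, f2 := b 2, f1 := b 1, f0 := b 0 }

theorem y02_singular {R : Type*} [Semiring R] [Algebra K R] (b : ℕ → K) (c : K) (x : R) :
    (singular b c).y02 x = c • x ^ 4 := by
  simp [y02_eq, singular]

theorem singular_solves {b : ℕ → K} {c : K} (hc : c ≠ 0) (hb8 : c ^ 2 = b 8) (hb7 : b 7 = 0)
    (hb5 : b 5 ≠ 0) : (singular b c).Solves b where
  coeff_eight := hb8.symm
  coeff_seven := by simp [singular, hb7]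
  coeff_six := by simp [singular, mul_div_cancel₀, hc]
  coeff_five := by simp [singular, mul_div_cancel₀, hc]
  coeff_four := by simp [singular, hc]
  coeff_three := by
    have hd1 : b 5 / c ≠ 0 := div_ne_zero hb5 hc
    simp [singular, mul_div_cancel₀, hd1]
  coeff_two := rfl
  coeff_one := rfl
  coeff_zero := rfl

end Singular

end Y12Params

theorem y12_real_singular_case_general {K R : Type*} [Field K] [Semiring R] [Algebra K R]
    (b : ℕ → K) {c4 : K} (hc4 : c4 ≠ 0) (hb8 : c4 ^ 2 = b 8) (hb7 : b 7 = 0) (hb5 : b 5 ≠ 0)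
    (x : R) :
    let d1 := b 5 / c4
    let e2 := b 3 / d1
    let d2 := b 6 / c4 - e2
    let e0 := (b 4 - d2 * e2) / c4
    let y02 := c4 • x ^ 4
    (y02 + d2 • x ^ 2 + d1 • x) * (y02 + e2 • x ^ 2) + e0 • y02 +
        b 2 • x ^ 2 + b 1 • x + b 0 • (1 : R)
      = ∑ i ∈ Finset.range 9, b i • x ^ i := by
  have h := (Y12Params.singular_solves hc4 hb8 hb7 hb5).y12_eq_sum x
  rwa [Y12Params.y12, Y12Params.y02_singular] at h

/-- The singular case `b_7 = 0` (so `c_3 = 0`), requiring `b_5 ≠ 0`: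
with `c_4 = √b_8`, `d_1 = b_5/c_4`, `e_2 = b_3/d_1`, `d_2 = b_6/c_4 − e_2`,
`e_0 = (b_4 − d_2 e_2)/c_4`, the scheme `y_{12}(A)` with `y_{02}(A) = c_4 A⁴`
equals `Σ_{i=0}^{8} b_i A^i` for every real square matrix `A`. -/
theorem y12_real_singular_case (b : ℕ → ℝ) (hb8 : 0 < b 8) (hb7 : b 7 = 0)
    (hb5 : b 5 ≠ 0) {n : ℕ} (A : Matrix (Fin n) (Fin n) ℝ) :
    let c4 := Real.sqrt (b 8)
    let d1 := b 5 / c4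
    let e2 := b 3 / d1
    let d2 := b 6 / c4 - e2
    let e0 := (b 4 - d2 * e2) / c4
    let y02 := c4 • A ^ 4
    (y02 + d2 • A ^ 2 + d1 • A) * (y02 + e2 • A ^ 2) + e0 • y02 +
        b 2 • A ^ 2 + b 1 • A + b 0 • (1 : Matrix (Fin n) (Fin n) ℝ)
      = ∑ i ∈ Finset.range 9, b i • A ^ i :=
  y12_real_singular_case_general b (Real.sqrt_ne_zero'.mpr hb8) (Real.sq_sqrt hb8.le) hb7 hb5 A
end

section
/- Let b_0, …, b_8 be complex numbers with b_8 ≠ 0 and with b_7 ≠ 0 or b_5 ≠ 0. Then there exist complex numbers c_4, c_3, d_2, d_1, e_2, e_0, f_2, f_1, f_0 such that for every complex square matrix A, with y_{02}(A) = c_4 A⁴ + c_3 A³, the scheme y_{12}(A) = (y_{02}(A) + d_2 A² + d_1 A)(y_{02}(A) + e_2 A²) + e_0 y_{02}(A) + f_2 A² + f_1 A + f_0 I equals Σ_{i=0}^{8} b_i A^i. -/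
/-!
Comparing coefficients of `A ^ 8`, …, `A ^ 5` determines `c4` (a square root of `b 8`), then `c3`,
`d2 + e2` and `d1`, each by a division by `c4` or `2 * c4`. With `e2` left free, `A ^ 4` determines
`e0`, and the coefficient of `A ^ 3` becomes a quadratic equation for `e2` with leading coefficient
`c3 = b 7 / (2 * c4)`. If `b 7 = 0` it degenerates to the linear equation `b 5 * e2 = c4 * b 3`,
solvable unless `b 5 = 0` and `b 3 ≠ 0`.
-/

open Finset Polynomial

/-- The scalar parameters `c₄, c₃, d₂, d₁, e₂, e₀, f₂, f₁, f₀` of the evaluation scheme `y₁₂`. -/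
structure Y12Coeffs (K : Type*) where
  (c4 c3 d2 d1 e2 e0 f2 f1 f0 : K)

namespace Y12Coeffs

section Scheme

variable {K R : Type*} [CommSemiring K] [Semiring R] [Algebra K R]

/-- The first stage `y₀₂` of the scheme, shared by both factors of `y₁₂`. -/
def y02 (k : Y12Coeffs K) (a : R) : R :=
  k.c4 • a ^ 4 + k.c3 • a ^ 3

/-- The output `y₁₂` of the scheme, at an element of an arbitrary `K`-algebra. -/
def y12 (k : Y12Coeffs K) (a : R) : R :=
  (k.y02 a + k.d2 • a ^ 2 + k.d1 • a) * (k.y02 a + k.e2 • a ^ 2) + k.e0 • k.y02 a +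
    k.f2 • a ^ 2 + k.f1 • a + k.f0 • (1 : R)

/-- The coefficient of `a ^ i` in the expansion of `y₁₂`. -/
def coeff (k : Y12Coeffs K) : ℕ → K
  | 0 => k.f0
  | 1 => k.f1
  | 2 => k.f2
  | 3 => k.d1 * k.e2 + k.c3 * k.e0
  | 4 => k.d2 * k.e2 + k.c3 * k.d1 + k.c4 * k.e0
  | 5 => k.c3 * (k.d2 + k.e2) + k.c4 * k.d1
  | 6 => k.c3 ^ 2 + k.c4 * (k.d2 + k.e2)
  | 7 => 2 * k.c4 * k.c3
  | 8 => k.c4 ^ 2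
  | _ => 0

theorem y12_eq_sum_coeff (k : Y12Coeffs K) (a : R) :
    k.y12 a = ∑ i ∈ range 9, k.coeff i • a ^ i := by
  simp only [y12, y02, coeff, sum_range_succ, sum_range_zero, zero_add, pow_zero, pow_one,
    add_mul, mul_add, smul_mul_smul_comm, ← pow_add, ← pow_succ']
  norm_num only
  module

end Scheme

section BackSubstitution

variable {K : Type*} [Field K] (b : ℕ → K) (c e : K)

/-- The value of `c₃` forced by the coefficient `b 7` once `c₄ = c`. -/
def solvedC3 : K :=
  b 7 / (2 * c)

/-- The value of `d₂ + e₂` forced by the coefficient `b 6` once `c₄ = c`. -/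
def solvedSum : K :=
  (b 6 - solvedC3 b c ^ 2) / c

/-- The value of `d₁` forced by the coefficient `b 5` once `c₄ = c`. -/
def solvedD1 : K :=
  (b 5 - solvedC3 b c * solvedSum b c) / c

/-- The parameters obtained by back substitution in the coefficient equations, for a prescribed
leading parameter `c₄ = c` and a free parameter `e₂ = e`; only the equation for `b 3` remains. -/
def backSubst : Y12Coeffs K where
  c4 := c
  c3 := solvedC3 b c
  d2 := solvedSum b c - e
  d1 := solvedD1 b c
  e2 := e
  e0 := (b 4 - (solvedSum b c - e) * e - solvedC3 b c * solvedD1 b c) / c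
  f2 := b 2
  f1 := b 1
  f0 := b 0

/-- The quadratic polynomial in `e₂` whose roots solve the remaining equation, for the coefficient
`b 3`. -/
noncomputable def e2Poly : K[X] :=
  C (solvedC3 b c) * X ^ 2 + C (b 5 - 2 * solvedC3 b c * solvedSum b c) * X +
    C (solvedC3 b c * (b 4 - solvedC3 b c * solvedD1 b c) - c * b 3)

variable {b c e}

theorem eval_e2Poly (hc : c ≠ 0) :
    (e2Poly b c).eval e = c * ((backSubst b c e).coeff 3 - b 3) := by
  have hd1 : c * solvedD1 b c = b 5 - solvedC3 b c * solvedSum b c := mul_div_cancel₀ _ hc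
  have he0 : c * (backSubst b c e).e0 =
      b 4 - (solvedSum b c - e) * e - solvedC3 b c * solvedD1 b c := mul_div_cancel₀ _ hc
  have hcoeff : (backSubst b c e).coeff 3 =
      solvedD1 b c * e + solvedC3 b c * (backSubst b c e).e0 := rfl
  rw [hcoeff]
  simp only [e2Poly, eval_add, eval_mul, eval_C, eval_pow, eval_X]
  linear_combination -e * hd1 - solvedC3 b c * he0

theorem coeff_backSubst [NeZero (2 : K)] (hc : c ≠ 0) (hcb : c ^ 2 = b 8)
    (he : (e2Poly b c).IsRoot e) {i : ℕ} (hi : i < 9) : (backSubst b c e).coeff i = b i := by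
  have h3 : (backSubst b c e).coeff 3 = b 3 := by
    have h : c * ((backSubst b c e).coeff 3 - b 3) = 0 := eval_e2Poly hc ▸ he
    exact sub_eq_zero.mp ((mul_eq_zero.mp h).resolve_left hc)
  interval_cases i
  · rfl
  · rfl
  · rfl
  · exact h3
  · simp only [backSubst, coeff]
    field_simp
    ring
  · simp only [backSubst, coeff, solvedD1]
    field_simp
    ring
  · simp only [backSubst, coeff, solvedSum]
    field_simp
    ring
  · simp only [backSubst, coeff, solvedC3]
    field_simp
  · exact hcb

theorem exists_isRoot_e2Poly [IsAlgClosed K] [NeZero (2 : K)] (hc : c ≠ 0)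
    (hb : b 7 ≠ 0 ∨ b 5 ≠ 0 ∨ b 3 = 0) : ∃ e, (e2Poly b c).IsRoot e := by
  by_cases h7 : b 7 = 0
  · have hlin : e2Poly b c = C (b 5) * X + C (-(c * b 3)) := by
      simp [e2Poly, solvedC3, h7]
    rw [hlin]
    rcases hb.resolve_left (not_not_intro h7) with h5 | h3
    · exact IsAlgClosed.exists_root _ (degree_linear h5 ▸ one_ne_zero)
    · exact ⟨0, by simp [h3]⟩
  · have hc3 : solvedC3 b c ≠ 0 := div_ne_zero h7 (mul_ne_zero two_ne_zero hc)
    exact IsAlgClosed.exists_root _ (degree_quadratic hc3 ▸ two_ne_zero)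

end BackSubstitution

end Y12Coeffs

theorem y12_complex_exists_general {K : Type*} [Field K] [IsAlgClosed K] [NeZero (2 : K)]
    (b : ℕ → K) (hb8 : b 8 ≠ 0) (hb : b 7 ≠ 0 ∨ b 5 ≠ 0 ∨ b 3 = 0) :
    ∃ k : Y12Coeffs K, ∀ {R : Type*} [Semiring R] [Algebra K R] (a : R),
      k.y12 a = ∑ i ∈ range 9, b i • a ^ i := by
  obtain ⟨c, hcb⟩ := IsAlgClosed.exists_pow_nat_eq (b 8) two_pos
  have hc : c ≠ 0 := by
    rintro rfl
    exact hb8 (by simp [← hcb])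
  obtain ⟨e, he⟩ := Y12Coeffs.exists_isRoot_e2Poly hc hb
  refine ⟨.backSubst b c e, fun a => ?_⟩
  rw [Y12Coeffs.y12_eq_sum_coeff]
  exact sum_congr rfl fun i hi => by rw [Y12Coeffs.coeff_backSubst hc hcb he (mem_range.mp hi)]

/-- For complex coefficients with `b_8 ≠ 0` and (`b_7 ≠ 0` or `b_5 ≠ 0`),
there exist complex scalars `c_4, c_3, d_2, d_1, e_2, e_0, f_2, f_1, f_0` such that
the three-product scheme `y_{12}(A)` equals `Σ_{i=0}^{8} b_i A^i` for every complex
square matrix `A`. -/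
theorem y12_complex_exists (b : ℕ → ℂ) (hb8 : b 8 ≠ 0) (hb : b 7 ≠ 0 ∨ b 5 ≠ 0) :
    ∃ c4 c3 d2 d1 e2 e0 f2 f1 f0 : ℂ,
      ∀ (n : ℕ) (A : Matrix (Fin n) (Fin n) ℂ),
        (c4 • A ^ 4 + c3 • A ^ 3 + d2 • A ^ 2 + d1 • A) *
            (c4 • A ^ 4 + c3 • A ^ 3 + e2 • A ^ 2) +
          e0 • (c4 • A ^ 4 + c3 • A ^ 3) + f2 • A ^ 2 + f1 • A +
          f0 • (1 : Matrix (Fin n) (Fin n) ℂ)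
          = ∑ i ∈ Finset.range 9, b i • A ^ i := by
  obtain ⟨k, hk⟩ := y12_complex_exists_general b hb8 (hb.imp_right Or.inl)
  exact ⟨k.c4, k.c3, k.d2, k.d1, k.e2, k.e0, k.f2, k.f1, k.f0, fun _ A => hk A⟩
end
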